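/- Let W be a Weyl candidate on 4-dimensional Minkowski space and T its Bel–Robinson tensor (generalized dominant property). If u₁, u₂, u₃, u₄ : Fin 4 → ℝ are causal future-directed vectors (i.e. ∑_{a,b} η a b · uᵢ a · uᵢ b ≤ 0 and uᵢ 0 > 0 for each i), then ∑_{a,b,c,d} T a b c d · u₁ a · u₂ b · u₃ c · u₄ d ≥ 0. -/

import Mathlib

/-!
The proof is the spinor argument in tensor clothing.

A Weyl candidate is encoded by its electric and magnetic parts, that is, by the complex symmetric
matrix `Q = E + iB` (`weylMat`). A pair of vectors `u, v` gives a Hermitian `3 × 3` matrix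
`N(u, v)` (`maxwell`): the stress-energy tensor of an electromagnetic field, written as
`f = E ± iB` (the sign is a matter of orientation) and contracted with `u` and `v`, is the Hermitian
form `f ↦ f† N(u, v) f` (up to normalization). The Bel–Robinson tensor is the analogous quadratic
expression in `Q`:

  `T(u₁, u₂, u₃, u₄) = Re tr (Q† N(u₁, u₂) Q N(u₃, u₄)ᵀ)`.

On basis vectors this is `belRobinson_eq_weylForm`, a comparison of components in which all
components of `W` are expressed by ten independent ones; the general case follows by
multilinearity.

The right-hand side is non-negative as soon as both `N` are positive semidefinite
(`weylForm_nonneg`). This is the dominant energy condition for electromagnetism: identifying `ℂ³`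
with the symmetric 2-spinors through a fixed matrix `P` (`symSpinor`), one has
`N(u, v) = ½ P† (U ⊗ V) P`, where `U = u⁰ + u¹σ₁ + u²σ₂ + u³σ₃` (`hermMat`) is positive
semidefinite for `u` causal and future-directed.
-/

/-- The Minkowski metric `η` on `Fin 4`: `η 0 0 = -1`, `η a a = 1` for `a ≠ 0`,
and `η a b = 0` for `a ≠ b`. -/
def eta (a b : Fin 4) : ℝ := if a = b then (if a = 0 then -1 else 1) else 0

/-- A Weyl candidate on 4-dimensional Minkowski space. -/
def IsWeylCandidate (W : Fin 4 → Fin 4 → Fin 4 → Fin 4 → ℝ) : Prop :=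
  (∀ a b c d, W a b c d = - W b a c d) ∧
  (∀ a b c d, W a b c d = - W a b d c) ∧
  (∀ a b c d, W a b c d = W c d a b) ∧
  (∀ a b c d, W a b c d + W a c d b + W a d b c = 0) ∧
  (∀ b c, ∑ p : Fin 4, ∑ q : Fin 4, eta p q * W p b q c = 0)

/-- The Bel–Robinson tensor of a Weyl candidate `W`. -/
noncomputable def belRobinson (W : Fin 4 → Fin 4 → Fin 4 → Fin 4 → ℝ) (a b c d : Fin 4) : ℝ :=
  (∑ p : Fin 4, ∑ q : Fin 4, ∑ m : Fin 4, ∑ n : Fin 4,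
      eta p q * eta m n * (W a p d m * W b q c n + W a m c p * W b n d q))
  - (1/8) * eta a b * eta c d *
      (∑ m : Fin 4, ∑ n : Fin 4, ∑ p : Fin 4, ∑ l : Fin 4, W m n p l *
        (∑ m' : Fin 4, ∑ n' : Fin 4, ∑ p' : Fin 4, ∑ l' : Fin 4,
          eta m m' * eta n n' * eta p p' * eta l l' * W m' n' p' l'))

open scoped ComplexOrder

/-! ### Positivity of the stress-energy form of electromagnetism -/

/-- The Hermitian matrix `u⁰ + u¹σ₁ + u²σ₂ + u³σ₃` of a vector `u`, with `σᵢ` the Pauli matrices.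
Its determinant is minus the Minkowski square of `u`. -/
noncomputable def hermMat (u : Fin 4 → ℝ) : Matrix (Fin 2) (Fin 2) ℂ :=
  !![(u 0 : ℂ) + u 3, u 1 - u 2 * Complex.I; u 1 + u 2 * Complex.I, u 0 - u 3]

lemma hermMat_posSemidef (u : Fin 4 → ℝ)
    (h : (∑ a : Fin 4, ∑ b : Fin 4, eta a b * u a * u b) ≤ 0 ∧ 0 < u 0) :
    (hermMat u).PosSemidef := by
  obtain ⟨h, h0⟩ := h
  have hdet : 0 ≤ u 0 ^ 2 - u 1 ^ 2 - u 2 ^ 2 - u 3 ^ 2 := by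
    simp [Fin.sum_univ_four, eta] at h
    linarith
  -- Cayley–Hamilton: `2 u⁰ U = U² + (det U) 1`, and `U² = U† U`.
  have key : hermMat u = (1 / (2 * u 0)) • ((hermMat u).conjTranspose * hermMat u
      + (u 0 ^ 2 - u 1 ^ 2 - u 2 ^ 2 - u 3 ^ 2) • (1 : Matrix (Fin 2) (Fin 2) ℂ)) := by
    have h0' : (u 0 : ℂ) ≠ 0 := by exact_mod_cast h0.ne'
    ext i j
    fin_cases i <;> fin_cases j <;>
      simp [hermMat, Matrix.mul_apply, Fin.sum_univ_two] <;> field_simp <;> ring_nf <;>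
      simp [Complex.I_sq]
  rw [key]
  exact ((Matrix.posSemidef_conjTranspose_mul_self _).add
    (Matrix.PosSemidef.one.smul hdet)).smul (by positivity)

/-- The isomorphism of `ℂ³` with the symmetric elements of `ℂ² ⊗ ℂ²`: the columns are the symmetric
matrices `σᵢ ε`, where `ε` is the antisymmetric `2 × 2` matrix (up to a common sign). -/
noncomputable def symSpinor : Matrix (Fin 2 × Fin 2) (Fin 3) ℂ := fun A i =>
  (![!![1, 0; 0, -1], !![-Complex.I, 0; 0, -Complex.I], !![0, -1; -1, 0]] i :
    Matrix (Fin 2) (Fin 2) ℂ) A.1 A.2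

/-- The Hermitian matrix
`N(u, v)ᵢₖ = (u⁰v⁰ + u·v) δᵢₖ - uᵢvₖ - uₖvᵢ - i εᵢₖₘ (u⁰vₘ + v⁰uₘ)`, whose quadratic form is, up
to normalization and orientation, the stress-energy tensor of the electromagnetic field
`f = E ± iB` contracted with `u` and `v`. Latin indices are spatial. -/
noncomputable def maxwell (u v : Fin 4 → ℝ) : Matrix (Fin 3) (Fin 3) ℂ :=
  !![(u 0 * v 0 + u 2 * v 2 + u 3 * v 3 - u 1 * v 1 : ℂ),
      -(u 1 * v 2 + u 2 * v 1) - (u 0 * v 3 + u 3 * v 0) * Complex.I,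
      -(u 1 * v 3 + u 3 * v 1) + (u 0 * v 2 + u 2 * v 0) * Complex.I;
    -(u 1 * v 2 + u 2 * v 1) + (u 0 * v 3 + u 3 * v 0) * Complex.I,
      u 0 * v 0 + u 1 * v 1 + u 3 * v 3 - u 2 * v 2,
      -(u 2 * v 3 + u 3 * v 2) - (u 0 * v 1 + u 1 * v 0) * Complex.I;
    -(u 1 * v 3 + u 3 * v 1) - (u 0 * v 2 + u 2 * v 0) * Complex.I,
      -(u 2 * v 3 + u 3 * v 2) + (u 0 * v 1 + u 1 * v 0) * Complex.I,
      u 0 * v 0 + u 1 * v 1 + u 2 * v 2 - u 3 * v 3]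

open scoped Kronecker in
lemma maxwell_eq (u v : Fin 4 → ℝ) : maxwell u v =
    (1 / 2 : ℝ) • (symSpinor.conjTranspose * (hermMat u ⊗ₖ hermMat v) * symSpinor) := by
  ext i j
  fin_cases i <;> fin_cases j <;>
    simp [maxwell, symSpinor, hermMat, Matrix.mul_apply, Fintype.sum_prod_type, Fin.sum_univ_two] <;>
    ring_nf <;> simp [Complex.I_sq] <;> ring

lemma maxwell_posSemidef {u v : Fin 4 → ℝ} (hu : (hermMat u).PosSemidef)
    (hv : (hermMat v).PosSemidef) : (maxwell u v).PosSemidef := by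
  rw [maxwell_eq]
  exact ((hu.kronecker hv).conjTranspose_mul_mul_same _).smul (by norm_num)

lemma maxwell_conjTranspose (u v : Fin 4 → ℝ) : (maxwell u v).conjTranspose = maxwell u v := by
  ext i j
  fin_cases i <;> fin_cases j <;> simp [maxwell, ← sub_eq_add_neg]

lemma maxwell_comm (u v : Fin 4 → ℝ) : maxwell u v = maxwell v u := by
  ext i j
  fin_cases i <;> fin_cases j <;> simp [maxwell] <;> ring

lemma maxwell_eq_sum (u v : Fin 4 → ℝ) : maxwell u v =
    ∑ a, ∑ b, (u a * v b) • maxwell (Pi.single a 1) (Pi.single b 1) := by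
  ext i j
  fin_cases i <;> fin_cases j <;>
    simp [maxwell, Fin.sum_univ_four, Matrix.sum_apply] <;> ring

/-! ### The bilinear form attached to a Weyl candidate -/

/-- The complex matrix `Q = E + iB` of a Weyl candidate, with electric part `Eᵢⱼ = W₀ᵢ₀ⱼ` and
magnetic part `Bᵢⱼ = ½ εⱼₖₗ W₀ᵢₖₗ`. Only entries on and above the diagonal are read off from `W`, so
that `Q` is symmetric by construction. -/
noncomputable def weylMat (W : Fin 4 → Fin 4 → Fin 4 → Fin 4 → ℝ) : Matrix (Fin 3) (Fin 3) ℂ :=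
  !![W 0 1 0 1 + W 0 1 2 3 * Complex.I, W 0 1 0 2 - W 0 1 1 3 * Complex.I,
      W 0 1 0 3 + W 0 1 1 2 * Complex.I;
    W 0 1 0 2 - W 0 1 1 3 * Complex.I, W 0 2 0 2 - W 0 2 1 3 * Complex.I,
      W 0 2 0 3 + W 0 2 1 2 * Complex.I;
    W 0 1 0 3 + W 0 1 1 2 * Complex.I, W 0 2 0 3 + W 0 2 1 2 * Complex.I,
      W 0 3 0 3 + W 0 3 1 2 * Complex.I]

/-- The real bilinear form `(X, Y) ↦ Re tr (Q† X Q Yᵀ)`, where `Q = weylMat W`. -/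
noncomputable def weylForm (W : Fin 4 → Fin 4 → Fin 4 → Fin 4 → ℝ)
    (X Y : Matrix (Fin 3) (Fin 3) ℂ) : ℝ :=
  (Matrix.trace ((weylMat W).conjTranspose * X * weylMat W * Y.transpose)).re

open scoped MatrixOrder in
/-- Writing `Yᵀ = B† B`, the trace is that of the positive semidefinite matrix `B Q† X Q B†`. -/
lemma weylForm_nonneg (W : Fin 4 → Fin 4 → Fin 4 → Fin 4 → ℝ) {X Y : Matrix (Fin 3) (Fin 3) ℂ}
    (hX : X.PosSemidef) (hY : Y.PosSemidef) : 0 ≤ weylForm W X Y := by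
  obtain ⟨B, hB⟩ : ∃ B : Matrix (Fin 3) (Fin 3) ℂ, Y.transpose = B.conjTranspose * B :=
    CStarAlgebra.nonneg_iff_eq_star_mul_self.mp hY.transpose.nonneg
  have h := ((hX.conjTranspose_mul_mul_same (weylMat W)).mul_mul_conjTranspose_same B).trace_nonneg
  rw [Matrix.trace_mul_cycle, Matrix.trace_mul_comm, ← hB] at h
  exact (Complex.nonneg_iff.mp h).1

lemma weylForm_sum (W : Fin 4 → Fin 4 → Fin 4 → Fin 4 → ℝ) (f g : Fin 4 → Fin 4 → ℝ)
    (X Y : Fin 4 → Fin 4 → Matrix (Fin 3) (Fin 3) ℂ) :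
    weylForm W (∑ a, ∑ b, f a b • X a b) (∑ c, ∑ d, g c d • Y c d) =
      ∑ a, ∑ b, ∑ c, ∑ d, f a b * g c d * weylForm W (X a b) (Y c d) := by
  have hl : ∀ Z, weylForm W (∑ a, ∑ b, f a b • X a b) Z =
      ∑ a, ∑ b, f a b * weylForm W (X a b) Z := fun Z => by
    simp only [weylForm, Matrix.mul_sum, Matrix.sum_mul, Matrix.mul_smul, Matrix.smul_mul,
      Matrix.trace_sum, Matrix.trace_smul, Complex.re_sum, Complex.smul_re, smul_eq_mul]
  have hr : ∀ Z, weylForm W Z (∑ c, ∑ d, g c d • Y c d) =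
      ∑ c, ∑ d, g c d * weylForm W Z (Y c d) := fun Z => by
    simp only [weylForm, Matrix.transpose_sum, Matrix.transpose_smul, Matrix.mul_sum,
      Matrix.mul_smul, Matrix.trace_sum, Matrix.trace_smul, Complex.re_sum, Complex.smul_re,
      smul_eq_mul]
  simp only [hl, hr, Finset.mul_sum, mul_assoc]

/-- Since `N` is Hermitian and `Q` symmetric, `tr (Q† N Q Mᵀ) = tr ((N Q)† (M Q)ᵀ)`. -/
lemma weylForm_maxwell (W : Fin 4 → Fin 4 → Fin 4 → Fin 4 → ℝ) (u v w x : Fin 4 → ℝ) :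
    weylForm W (maxwell u v) (maxwell w x) = ∑ k, ∑ j,
      (((maxwell u v * weylMat W) j k).re * ((maxwell w x * weylMat W) k j).re +
       ((maxwell u v * weylMat W) j k).im * ((maxwell w x * weylMat W) k j).im) := by
  have hs : (weylMat W).transpose = weylMat W := by
    ext i j
    fin_cases i <;> fin_cases j <;> rfl
  have : weylForm W (maxwell u v) (maxwell w x) = (Matrix.trace
      ((maxwell u v * weylMat W).conjTranspose * (maxwell w x * weylMat W).transpose)).re := by
    rw [Matrix.conjTranspose_mul, Matrix.transpose_mul, hs, maxwell_conjTranspose, weylForm,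
      ← Matrix.mul_assoc]
  rw [this]
  generalize maxwell u v * weylMat W = L
  generalize maxwell w x * weylMat W = M
  simp [Matrix.trace, Matrix.mul_apply]

lemma weylForm_comm (W : Fin 4 → Fin 4 → Fin 4 → Fin 4 → ℝ) (u v w x : Fin 4 → ℝ) :
    weylForm W (maxwell u v) (maxwell w x) = weylForm W (maxwell w x) (maxwell u v) := by
  rw [weylForm_maxwell, weylForm_maxwell, Finset.sum_comm]
  simp only [mul_comm]

/-! ### Components of the Bel–Robinson tensor -/

lemma belRobinson_eq (W : Fin 4 → Fin 4 → Fin 4 → Fin 4 → ℝ) (a b c d : Fin 4) :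
    belRobinson W a b c d = ∑ p, ∑ m, eta p p * eta m m *
        (W a p d m * W b p c m + W a p c m * W b p d m)
      - (1/8) * eta a b * eta c d *
        (∑ m, ∑ n, ∑ p, ∑ l, eta m m * eta n n * eta p p * eta l l * W m n p l ^ 2) := by
  have h : ∀ (p : Fin 4) (f : Fin 4 → ℝ), ∑ q, eta p q * f q = eta p p * f p := by
    intro p f
    refine Finset.sum_eq_single p (fun q _ hq => ?_) (by simp)
    simp [eta, hq.symm]
  unfold belRobinson
  congr 1
  · simp only [mul_assoc, ← Finset.mul_sum, h, mul_add, Finset.sum_add_distrib]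
    congr 1
    simp only [Finset.mul_sum]
    rw [Finset.sum_comm]
    refine Finset.sum_congr rfl fun m _ => Finset.sum_congr rfl fun p _ => ?_
    ring
  · congr 1
    refine Finset.sum_congr rfl fun m _ => Finset.sum_congr rfl fun n _ =>
      Finset.sum_congr rfl fun p _ => Finset.sum_congr rfl fun l _ => ?_
    simp only [mul_assoc, ← Finset.mul_sum, h]
    ring

lemma belRobinson_swap (W : Fin 4 → Fin 4 → Fin 4 → Fin 4 → ℝ) (a b c d : Fin 4) :
    belRobinson W a b c d = belRobinson W b a c d := by
  have h : eta a b = eta b a := by simp only [eta]; grind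
  rw [belRobinson_eq, belRobinson_eq, h]
  congr 1
  exact Finset.sum_congr rfl fun p _ => Finset.sum_congr rfl fun m _ => by ring

lemma belRobinson_pair (W : Fin 4 → Fin 4 → Fin 4 → Fin 4 → ℝ)
    (hs : ∀ a b c d, W a b c d = W c d a b) (a b c d : Fin 4) :
    belRobinson W a b c d = belRobinson W c d a b := by
  rw [belRobinson_eq, belRobinson_eq]
  congr 1
  · rw [Finset.sum_comm]
    refine Finset.sum_congr rfl fun m _ => Finset.sum_congr rfl fun p _ => ?_
    rw [hs a, hs b, hs a, hs b]
    ring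
  · ring

set_option linter.unusedSimpArgs false in
set_option linter.flexible false in
set_option maxHeartbeats 0 in
/-- The case of ordered indices, to which the symmetries of both sides reduce the general one. -/
lemma belRobinson_eq_weylForm_of_le (W : Fin 4 → Fin 4 → Fin 4 → Fin 4 → ℝ)
    (hW : IsWeylCandidate W) (a b c d : Fin 4) (hab : a ≤ b) (hcd : c ≤ d) (hac : a ≤ c) :
    belRobinson W a b c d = weylForm W (maxwell (Pi.single a 1) (Pi.single b 1))
      (maxwell (Pi.single c 1) (Pi.single d 1)) := by
  obtain ⟨hl, hr, hs, hb, ht⟩ := hW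
  have l0 : ∀ a c d, W a a c d = 0 := fun a c d => by linarith [hl a a c d]
  have r0 : ∀ a c d, W c d a a = 0 := fun a c d => by linarith [hr c d a a]
  -- The pair symmetries leave the components with ordered index pairs `01, 02, 03, 12, 13, 23`.
  have l10 := hl 1 0
  have l20 := hl 2 0
  have l30 := hl 3 0
  have l21 := hl 2 1
  have l31 := hl 3 1
  have l32 := hl 3 2
  have r10 := fun a b => hr a b 1 0
  have r20 := fun a b => hr a b 2 0
  have r30 := fun a b => hr a b 3 0
  have r21 := fun a b => hr a b 2 1
  have r31 := fun a b => hr a b 3 1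
  have r32 := fun a b => hr a b 3 2
  have s1 := hs 0 2 0 1
  have s2 := hs 0 3 0 1
  have s3 := hs 0 3 0 2
  have s4 := fun i => hs 1 2 0 i
  have s5 := fun i => hs 1 3 0 i
  have s6 := fun i => hs 2 3 0 i
  have s7 := hs 1 3 1 2
  have s8 := hs 2 3 1 2
  have s9 := hs 2 3 1 3
  have bi := hb 0 1 2 3
  have t00 := ht 0 0
  have t01 := ht 0 1
  have t02 := ht 0 2
  have t03 := ht 0 3
  have t11 := ht 1 1
  have t12 := ht 1 2
  have t13 := ht 1 3
  have t22 := ht 2 2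
  have t23 := ht 2 3
  have t33 := ht 3 3
  simp [Fin.sum_univ_four, eta, l0, r0, l10, l20, l30, l21, l31, l32,
    r10, r20, r30, r21, r31, r32, s1, s2, s3, s4, s5, s6, s7, s8, s9]
    at bi t00 t01 t02 t03 t11 t12 t13 t22 t23 t33
  -- The cyclic identity and the trace conditions leave ten independent components.
  have e33 : W 0 3 0 3 = -W 0 1 0 1 - W 0 2 0 2 := by linarith
  have b33 : W 0 3 1 2 = W 0 2 1 3 - W 0 1 2 3 := by linarith
  have b13 : W 0 3 2 3 = W 0 1 1 2 := by linarith
  have b12 : W 0 2 2 3 = -W 0 1 1 3 := by linarith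
  have b23 : W 0 3 1 3 = -W 0 2 1 2 := by linarith
  have f11 : W 2 3 2 3 = -W 0 1 0 1 := by linarith
  have f22 : W 1 3 1 3 = -W 0 2 0 2 := by linarith
  have f33 : W 1 2 1 2 = W 0 1 0 1 + W 0 2 0 2 := by linarith
  have f12 : W 1 3 2 3 = W 0 1 0 2 := by linarith
  have f13 : W 1 2 2 3 = -W 0 1 0 3 := by linarith
  have f23 : W 1 2 1 3 = W 0 2 0 3 := by linarith
  -- The full contraction of `W` with itself is `8 (|E|² - |B|²)`.
  have hK : ∑ m, ∑ n, ∑ p, ∑ l, eta m m * eta n n * eta p p * eta l l * W m n p l ^ 2 =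
      8 * (W 0 1 0 1 ^ 2 + W 0 2 0 2 ^ 2 + W 0 3 0 3 ^ 2 + 2 * W 0 1 0 2 ^ 2 + 2 * W 0 1 0 3 ^ 2
       + 2 * W 0 2 0 3 ^ 2 - W 0 1 2 3 ^ 2 - W 0 2 1 3 ^ 2 - W 0 3 1 2 ^ 2 - 2 * W 0 1 1 3 ^ 2
       - 2 * W 0 1 1 2 ^ 2 - 2 * W 0 2 1 2 ^ 2) := by
    simp [Fin.sum_univ_four, eta, l0, r0, l10, l20, l30, l21, l31, l32,
      r10, r20, r30, r21, r31, r32, s1, s2, s3, s4, s5, s6, s7, s8, s9,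
      e33, b33, b13, b12, b23, f11, f22, f33, f12, f13, f23]
    ring
  rw [belRobinson_eq, hK, weylForm_maxwell]
  fin_cases a <;> fin_cases b <;> first | exact absurd hab (by decide) | skip
  all_goals fin_cases c <;> first | exact absurd hac (by decide) | skip
  all_goals fin_cases d <;> first | exact absurd hcd (by decide) | skip
  all_goals
    simp [eta, maxwell, weylMat, Matrix.mul_apply, Fin.sum_univ_three, Fin.sum_univ_four,
      l0, r0, l10, l20, l30, l21, l31, l32,
      r10, r20, r30, r21, r31, r32, s1, s2, s3, s4, s5, s6, s7, s8, s9,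
      e33, b33, b13, b12, b23, f11, f22, f33, f12, f13, f23]
  all_goals ring

lemma belRobinson_eq_weylForm (W : Fin 4 → Fin 4 → Fin 4 → Fin 4 → ℝ) (hW : IsWeylCandidate W)
    (a b c d : Fin 4) :
    belRobinson W a b c d = weylForm W (maxwell (Pi.single a 1) (Pi.single b 1))
      (maxwell (Pi.single c 1) (Pi.single d 1)) := by
  have hp := belRobinson_pair W hW.2.2.1
  wlog hab : a ≤ b generalizing a b
  · rw [belRobinson_swap, maxwell_comm]
    exact this b a (le_of_not_ge hab)
  wlog hcd : c ≤ d generalizing c d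
  · rw [hp, belRobinson_swap, hp, maxwell_comm (Pi.single c 1)]
    exact this d c (le_of_not_ge hcd)
  rcases le_total a c with hac | hac
  · exact belRobinson_eq_weylForm_of_le W hW a b c d hab hcd hac
  · rw [hp, weylForm_comm]
    exact belRobinson_eq_weylForm_of_le W hW c d a b hcd hab hac

/-- Generalized dominant property: the Bel–Robinson tensor of a Weyl candidate,
contracted with four causal future-directed vectors, is non-negative. -/
theorem stmt_11 (W : Fin 4 → Fin 4 → Fin 4 → Fin 4 → ℝ) (hW : IsWeylCandidate W)
    (u₁ u₂ u₃ u₄ : Fin 4 → ℝ)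
    (h₁ : (∑ a : Fin 4, ∑ b : Fin 4, eta a b * u₁ a * u₁ b) ≤ 0 ∧ 0 < u₁ 0)
    (h₂ : (∑ a : Fin 4, ∑ b : Fin 4, eta a b * u₂ a * u₂ b) ≤ 0 ∧ 0 < u₂ 0)
    (h₃ : (∑ a : Fin 4, ∑ b : Fin 4, eta a b * u₃ a * u₃ b) ≤ 0 ∧ 0 < u₃ 0)
    (h₄ : (∑ a : Fin 4, ∑ b : Fin 4, eta a b * u₄ a * u₄ b) ≤ 0 ∧ 0 < u₄ 0) :
    0 ≤ ∑ a : Fin 4, ∑ b : Fin 4, ∑ c : Fin 4, ∑ d : Fin 4,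
      belRobinson W a b c d * u₁ a * u₂ b * u₃ c * u₄ d := by
  have key := weylForm_nonneg W
    (maxwell_posSemidef (hermMat_posSemidef u₁ h₁) (hermMat_posSemidef u₂ h₂))
    (maxwell_posSemidef (hermMat_posSemidef u₃ h₃) (hermMat_posSemidef u₄ h₄))
  rw [maxwell_eq_sum u₁, maxwell_eq_sum u₃, weylForm_sum] at key
  refine key.trans_eq (Finset.sum_congr rfl fun a _ => Finset.sum_congr rfl fun b _ =>
    Finset.sum_congr rfl fun c _ => Finset.sum_congr rfl fun d _ => ?_)
  rw [belRobinson_eq_weylForm W hW]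
  ring
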